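/- arXiv:2302.09535 — 2 statements merged into one kernel-verified Lean document; each statement's English description precedes it below -/
import Mathlib

section
/- Let k be a field of characteristic 2 and consider the ring R = k[[x,y,z]]/(z² + zx²y² + x⁵ + y⁵) (the singularity EDP_{4,4}^{(1)}). Then R is a normal domain and the origin is a double point: the multiplicity of the maximal ideal of R is 2. -/
open MvPowerSeries

namespace EDP

/-- An integral fraction over an integrally closed domain lies in the domain. -/
lemma mem_of_integral {A L : Type*} [CommRing A] [IsDomain A] [IsIntegrallyClosed A]
    [Field L] [Algebra A L] (inj : Function.Injective (algebraMap A L))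
    (v : L) (hv : IsIntegral A v) (n m : A) (hn : n ≠ 0)
    (h : algebraMap A L n * v = algebraMap A L m) : ∃ w : A, algebraMap A L w = v := by
  have : FaithfulSMul A L := (faithfulSMul_iff_algebraMap_injective A L).2 inj
  let := FractionRing.liftAlgebra A L
  have : IsScalarTower A (FractionRing A) L := FractionRing.isScalarTower_liftAlgebra A L
  have hn' : algebraMap A L n ≠ 0 := fun h0 => hn (inj (by simpa using h0))
  have hv' : v = algebraMap (FractionRing A) L
      (algebraMap A (FractionRing A) m / algebraMap A (FractionRing A) n) := by
    rw [map_div₀, ← IsScalarTower.algebraMap_apply, ← IsScalarTower.algebraMap_apply, ← h]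
    field_simp
  rw [hv', isIntegral_algebraMap_iff (algebraMap (FractionRing A) L).injective] at hv
  obtain ⟨w, hw⟩ := (isIntegrallyClosed_iff (FractionRing A)).1 inferInstance hv
  exact ⟨w, by rw [hv', ← hw, ← IsScalarTower.algebraMap_apply]⟩

lemma core {A S : Type*} [CommRing A] [IsDomain A] [IsIntegrallyClosed A] [CommRing S]
    [IsDomain S] [Algebra A S] (h2 : (2 : A) = 0) (p q : A) (hp : p ≠ 0) (z : S)
    (hz : z ^ 2 + algebraMap A S p * z + algebraMap A S q = 0)
    (hs : ∀ s : S, ∃ a b : A, s = algebraMap A S a + algebraMap A S b * z)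
    (inj : Function.Injective (algebraMap A S))
    (σ : S →ₐ[A] S) (hσ : σ z = z + algebraMap A S p)
    (H : ∀ a b c : A, a ^ 2 + a * b * p + b ^ 2 * q = c * p ^ 2 → p ∣ a ∧ p ∣ b) :
    IsIntegrallyClosed S := by
  have h2S : (2 : S) = 0 := by rw [← map_ofNat (algebraMap A S) 2, h2, map_zero]
  have σinj : Function.Injective σ := by
    have : ∀ s, σ (σ s) = s := by
      intro s
      obtain ⟨a, b, rfl⟩ := hs s
      simp only [map_add, map_mul, AlgHom.commutes, hσ]
      linear_combination (algebraMap A S b * algebraMap A S p) * h2S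
    exact Function.LeftInverse.injective this
  let L := FractionRing S
  have injL : Function.Injective (algebraMap A L) := by
    rw [IsScalarTower.algebraMap_eq A S L]
    exact (IsFractionRing.injective S L).comp inj
  let g : S →ₐ[A] L := (IsScalarTower.toAlgHom A S L).comp σ
  have hg : Function.Injective g := (IsFractionRing.injective S L).comp σinj
  let τ : L →ₐ[A] L := IsFractionRing.liftAlgHom (K := L) hg
  have hτ : ∀ s, τ (algebraMap S L s) = algebraMap S L (σ s) := by
    intro s
    simp [τ, g]
  have hAL : ∀ a : A, algebraMap S L (algebraMap A S a) = algebraMap A L a := fun a =>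
    (IsScalarTower.algebraMap_apply A S L a).symm
  have h2L : (2 : L) = 0 := by rw [← map_ofNat (algebraMap A L) 2, h2, map_zero]
  have : Algebra.IsIntegral A S := by
    refine ⟨fun s => ?_⟩
    have hzi : IsIntegral A z := by
      refine ⟨Polynomial.X ^ 2 + Polynomial.C p * Polynomial.X + Polynomial.C q, ?_, ?_⟩
      · monicity!
      · simpa using hz
    obtain ⟨a, b, rfl⟩ := hs s
    exact isIntegral_algebraMap.add (isIntegral_algebraMap.mul hzi)
  rw [isIntegrallyClosed_iff L]
  intro u hu
  have huA : IsIntegral A u := isIntegral_trans (R := A) (A := S) u hu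
  have hτu : IsIntegral A (τ u) := huA.map τ
  -- write `u = (a + b z) / n`
  obtain ⟨n, a, b, hn, hnu⟩ : ∃ n a b : A, n ≠ 0 ∧ algebraMap A L n * u =
      algebraMap A L a + algebraMap A L b * algebraMap S L z := by
    obtain ⟨s, d, hd, rfl⟩ := IsFractionRing.div_surjective (A := S) u
    have hd0 : d ≠ 0 := nonZeroDivisors.ne_zero hd
    obtain ⟨d1, d2, hd12⟩ := hs d
    obtain ⟨a, b, hab⟩ := hs (s * σ d)
    have hN : d * σ d = algebraMap A S (d1 ^ 2 + d1 * d2 * p + d2 ^ 2 * q) := by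
      rw [hd12]
      simp only [map_add, map_mul, map_pow, AlgHom.commutes, hσ]
      linear_combination (algebraMap A S d2) ^ 2 * hz +
        (algebraMap A S d1 * algebraMap A S d2 * z - algebraMap A S d2 ^ 2 * algebraMap A S q) * h2S
    refine ⟨d1 ^ 2 + d1 * d2 * p + d2 ^ 2 * q, a, b, ?_, ?_⟩
    · intro h0
      rw [h0, map_zero] at hN
      rcases mul_eq_zero.1 hN with h | h
      · exact hd0 h
      · exact hd0 (σinj (by simpa using h))
    · rw [← hAL, ← hN, ← hAL a, ← hAL b, ← map_mul (algebraMap S L) _ z, ← map_add, ← hab]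
      have : algebraMap S L d ≠ 0 := fun h => hd0 (IsFractionRing.injective S L (by simpa using h))
      rw [map_mul, map_mul, mul_right_comm, mul_div_cancel₀ _ this]
  set Z := algebraMap S L z with hZ
  have hτZ : τ Z = Z + algebraMap A L p := by
    rw [hZ, hτ, hσ, map_add, hAL]
  have hZZ : Z ^ 2 + algebraMap A L p * Z + algebraMap A L q = 0 := by
    have := congrArg (algebraMap S L) hz
    simpa [hAL] using this
  have hZi : IsIntegral A Z := (Algebra.IsIntegral.isIntegral (R := A) z).map
    (IsScalarTower.toAlgHom A S L)
  have hnτ : algebraMap A L n * τ u =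
      algebraMap A L a + algebraMap A L b * (Z + algebraMap A L p) := by
    have := congrArg τ hnu
    simpa [hτZ] using this
  have hn' : algebraMap A L n ≠ 0 := fun h0 => hn (injL (by simpa using h0))
  have hp' : algebraMap A L p ≠ 0 := fun h0 => hp (injL (by simpa using h0))
  obtain ⟨t, ht⟩ := mem_of_integral injL (u + τ u) (huA.add hτu) n (b * p) hn (by
    rw [mul_add, hnu, hnτ, map_mul]
    linear_combination (algebraMap A L a + algebraMap A L b * Z) * h2L)
  obtain ⟨N, hN⟩ := mem_of_integral injL (u * τ u) (huA.mul hτu) (n ^ 2)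
    (a ^ 2 + a * b * p + b ^ 2 * q) (pow_ne_zero 2 hn) (by
      have : algebraMap A L (n ^ 2) * (u * τ u) =
        (algebraMap A L n * u) * (algebraMap A L n * τ u) := by rw [map_pow]; ring
      rw [this, hnu, hnτ]
      simp only [map_add, map_mul, map_pow]
      linear_combination (algebraMap A L b) ^ 2 * hZZ +
        (algebraMap A L a * algebraMap A L b * Z - algebraMap A L b ^ 2 * algebraMap A L q) * h2L)
  have htb : algebraMap A L n * algebraMap A L t = algebraMap A L b * algebraMap A L p := by
    rw [ht, mul_add, hnu, hnτ]
    linear_combination (algebraMap A L a + algebraMap A L b * Z) * h2L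
  obtain ⟨s, hs'⟩ := mem_of_integral injL (algebraMap A L p * u - algebraMap A L t * Z)
    ((isIntegral_algebraMap.mul huA).sub (isIntegral_algebraMap.mul hZi)) n (a * p) hn (by
      rw [map_mul]
      linear_combination algebraMap A L p * hnu - Z * htb)
  have hpu : algebraMap A L p * u = algebraMap A L s + algebraMap A L t * Z := by
    rw [hs']; ring
  have hpτ : algebraMap A L p * τ u = algebraMap A L s +
      algebraMap A L t * (Z + algebraMap A L p) := by
    have := congrArg τ hpu
    simpa [hτZ] using this
  have key : s ^ 2 + s * t * p + t ^ 2 * q = N * p ^ 2 := by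
    apply injL
    have : algebraMap A L (N * p ^ 2) =
        (algebraMap A L p * u) * (algebraMap A L p * τ u) := by
      rw [map_mul, hN, map_pow]; ring
    rw [this, hpu, hpτ]
    simp only [map_add, map_mul, map_pow]
    linear_combination -(algebraMap A L t) ^ 2 * hZZ -
      (algebraMap A L s * algebraMap A L t * Z - algebraMap A L t ^ 2 * algebraMap A L q) * h2L
  obtain ⟨⟨s', rfl⟩, ⟨t', rfl⟩⟩ := H s t N key
  refine ⟨algebraMap A S s' + algebraMap A S t' * z, ?_⟩
  rw [map_add, map_mul, hAL, hAL, ← hZ]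
  apply mul_left_cancel₀ hp'
  rw [hpu]
  simp only [map_mul]
  ring

section PS
variable {k : Type*} [Field k]

lemma X_ne_zero {n : ℕ} (i : Fin n) : (X i : MvPowerSeries (Fin n) k) ≠ 0 := by
  intro h
  have := congrArg (coeff (Finsupp.single i 1)) h
  simp at this

instance dom (n : ℕ) : IsDomain (MvPowerSeries (Fin n) k) := NoZeroDivisors.to_isDomain _

lemma dvd_x (a b : MvPowerSeries (Fin 2) k)
    (h : X 0 ∣ a ^ 2 + b ^ 2 * X 1 ^ 5) : X 0 ∣ a ∧ X 0 ∣ b := by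
  let φ : MvPowerSeries (Fin 2) k →+* MvPowerSeries (Fin 1) k :=
    (PowerSeries.constantCoeff).comp
      (MvPowerSeries.finSuccEquiv k 1 : MvPowerSeries (Fin 2) k →+* _)
  have hφ : ∀ f, X 0 ∣ f ↔ φ f = 0 := by
    intro f
    have h1 : φ f = PowerSeries.constantCoeff (MvPowerSeries.finSuccEquiv k 1 f) := rfl
    rw [h1, ← PowerSeries.X_dvd_iff, ← finSuccEquiv_X_zero (R := k) (n := 1)]
    exact (map_dvd_iff (MvPowerSeries.finSuccEquiv k 1)).symm
  have hy : φ (X 1) = X 0 := by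
    change PowerSeries.constantCoeff (MvPowerSeries.finSuccEquiv k 1 (X (Fin.succ 0))) = _
    rw [finSuccEquiv_X_succ]; simp
  rw [hφ] at h
  simp only [map_add, map_mul, map_pow, hy] at h
  rw [hφ, hφ]
  generalize φ a = α at *
  generalize φ b = β at *
  have hβ : β = 0 := by
    by_contra hβ
    have h' : α * α = -(β * β * X 0 ^ 5) := by linear_combination h
    have ho := congrArg MvPowerSeries.order h'
    have hα : α ≠ 0 := by
      rintro rfl
      have : β ^ 2 * X 0 ^ 5 = 0 := by simpa using h
      exact (mul_ne_zero (pow_ne_zero 2 hβ) (pow_ne_zero 5 (EDP.X_ne_zero _))) this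
    have hX5 : (X 0 ^ 5 : MvPowerSeries (Fin 1) k).order = 5 := by
      rw [X_pow_eq, order_monomial_of_ne_zero one_ne_zero]
      simp
    rw [order_neg, order_mul, order_mul, order_mul, hX5,
      ← ne_zero_iff_order_finite.1 hα, ← ne_zero_iff_order_finite.1 hβ] at ho
    norm_cast at ho
    omega
  subst hβ
  simpa using h

lemma dvd_y (a b : MvPowerSeries (Fin 2) k)
    (h : X 1 ∣ a ^ 2 + b ^ 2 * X 0 ^ 5) : X 1 ∣ a ∧ X 1 ∣ b := by
  let τ := MvPowerSeries.renameEquiv k (Equiv.swap (0 : Fin 2) 1)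
  have h0 : τ (X 0) = X 1 := by simp [τ]
  have h1 : τ (X 1) = X 0 := by simp [τ]
  have := map_dvd τ h
  simp only [map_add, map_mul, map_pow, h0, h1] at this
  have := dvd_x _ _ this
  rwa [← h1, map_dvd_iff, map_dvd_iff] at this

lemma key_dvd (a b c : MvPowerSeries (Fin 2) k)
    (h : a ^ 2 + a * b * (X 0 ^ 2 * X 1 ^ 2) + b ^ 2 * (X 0 ^ 5 + X 1 ^ 5)
      = c * (X 0 ^ 2 * X 1 ^ 2) ^ 2) :
    (X 0 ^ 2 * X 1 ^ 2) ∣ a ∧ (X 0 ^ 2 * X 1 ^ 2) ∣ b := by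
  have hx0 : (X 0 : MvPowerSeries (Fin 2) k) ≠ 0 := EDP.X_ne_zero _
  have hy0 : (X 1 : MvPowerSeries (Fin 2) k) ≠ 0 := EDP.X_ne_zero _
  have hdx := dvd_x (k := k)
  have hdy := dvd_y (k := k)
  generalize (X 0 : MvPowerSeries (Fin 2) k) = x at *
  generalize (X 1 : MvPowerSeries (Fin 2) k) = y at *
  obtain ⟨⟨a, rfl⟩, ⟨b, rfl⟩⟩ := hdx a b
    ⟨c * x ^ 3 * y ^ 4 - a * b * x * y ^ 2 - b ^ 2 * x ^ 4, by linear_combination h⟩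
  have h : a ^ 2 + a * b * (x ^ 2 * y ^ 2) + b ^ 2 * (x ^ 5 + y ^ 5) = c * x ^ 2 * y ^ 4 := by
    apply mul_left_cancel₀ (pow_ne_zero 2 hx0)
    linear_combination h
  obtain ⟨⟨a, rfl⟩, ⟨b, rfl⟩⟩ := hdx a b
    ⟨c * x * y ^ 4 - a * b * x * y ^ 2 - b ^ 2 * x ^ 4, by linear_combination h⟩
  have h : a ^ 2 + a * b * (x ^ 2 * y ^ 2) + b ^ 2 * (x ^ 5 + y ^ 5) = c * y ^ 4 := by
    apply mul_left_cancel₀ (pow_ne_zero 2 hx0)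
    linear_combination h
  obtain ⟨⟨a, rfl⟩, ⟨b, rfl⟩⟩ := hdy a b
    ⟨c * y ^ 3 - a * b * x ^ 2 * y - b ^ 2 * y ^ 4, by linear_combination h⟩
  have h : a ^ 2 + a * b * (x ^ 2 * y ^ 2) + b ^ 2 * (x ^ 5 + y ^ 5) = c * y ^ 2 := by
    apply mul_left_cancel₀ (pow_ne_zero 2 hy0)
    linear_combination h
  obtain ⟨⟨a, rfl⟩, ⟨b, rfl⟩⟩ := hdy a b
    ⟨c * y - a * b * x ^ 2 * y - b ^ 2 * y ^ 4, by linear_combination h⟩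
  exact ⟨⟨a, by ring⟩, ⟨b, by ring⟩⟩

lemma not_X_dvd_one (i : Fin 2) : ¬ (X i : MvPowerSeries (Fin 2) k) ∣ 1 := by
  intro h
  have := map_dvd (MvPowerSeries.constantCoeff (σ := Fin 2) (R := k)) h
  simp at this

lemma no_root (a : MvPowerSeries (Fin 2) k)
    (h : a ^ 2 + X 0 ^ 2 * X 1 ^ 2 * a + (X 0 ^ 5 + X 1 ^ 5) = 0) : False := by
  refine not_X_dvd_one 0 (dvd_x a 1 ⟨-(X 0 * X 1 ^ 2 * a) - X 0 ^ 4, ?_⟩).2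
  linear_combination h

instance ufd1 : UniqueFactorizationMonoid (MvPowerSeries (Fin 2) k) := by
  let e : PowerSeries k ≃ₐ[k] MvPowerSeries (Fin 1) k :=
    MvPowerSeries.renameEquiv k (Equiv.ofUnique Unit (Fin 1))
  have : IsPrincipalIdealRing (MvPowerSeries (Fin 1) k) :=
    IsPrincipalIdealRing.of_surjective (e : PowerSeries k →+* MvPowerSeries (Fin 1) k) e.surjective
  exact (MvPowerSeries.finSuccEquiv k 1).symm.toMulEquiv.uniqueFactorizationMonoid inferInstance

/-- The defining polynomial. -/
noncomputable def poly (k : Type*) [Field k] : Polynomial (MvPowerSeries (Fin 2) k) :=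
  Polynomial.X ^ 2 + Polynomial.C (X 0 ^ 2 * X 1 ^ 2) * Polynomial.X
    + Polynomial.C (X 0 ^ 5 + X 1 ^ 5)

lemma poly_eval {S : Type*} [CommRing S] (f : MvPowerSeries (Fin 2) k →+* S) (z : S) :
    (poly k).eval₂ f z = z ^ 2 + f (X 0 ^ 2 * X 1 ^ 2) * z + f (X 0 ^ 5 + X 1 ^ 5) := by
  simp only [poly, Polynomial.eval₂_add, Polynomial.eval₂_mul, Polynomial.eval₂_pow,
    Polynomial.eval₂_X, Polynomial.eval₂_C]

lemma poly_natDegree : (poly k).natDegree = 2 := by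
  unfold poly; compute_degree!

lemma poly_monic : (poly k).Monic := by
  unfold poly; monicity!

lemma poly_prime : Prime (poly k) := by
  apply Irreducible.prime
  rw [poly_monic.irreducible_iff_roots_eq_zero_of_degree_le_three
    (by rw [poly_natDegree]) (by rw [poly_natDegree]; norm_num)]
  rw [Multiset.eq_zero_iff_forall_notMem]
  intro a ha
  have := Polynomial.isRoot_of_mem_roots ha
  refine no_root a ?_
  simpa [poly, Polynomial.IsRoot] using this

instance : IsDomain (AdjoinRoot (poly k)) := AdjoinRoot.isDomain_of_prime poly_prime

lemma adjoin_closed [CharP k 2] : IsIntegrallyClosed (AdjoinRoot (poly k)) := by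
  have h2 : (2 : MvPowerSeries (Fin 2) k) = 0 := by
    have : (2 : k) = 0 := CharTwo.two_eq_zero
    rw [← map_ofNat (MvPowerSeries.C (σ := Fin 2) (R := k)) 2, this, map_zero]
  have h2S : (2 : AdjoinRoot (poly k)) = 0 := by
    rw [← map_ofNat (algebraMap (MvPowerSeries (Fin 2) k) (AdjoinRoot (poly k))) 2, h2, map_zero]
  have hz : (AdjoinRoot.root (poly k)) ^ 2 +
      algebraMap (MvPowerSeries (Fin 2) k) (AdjoinRoot (poly k)) (X 0 ^ 2 * X 1 ^ 2) * AdjoinRoot.root (poly k) +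
      algebraMap (MvPowerSeries (Fin 2) k) (AdjoinRoot (poly k)) (X 0 ^ 5 + X 1 ^ 5) = 0 := by
    have := AdjoinRoot.eval₂_root (poly k)
    rwa [poly_eval] at this
  refine core h2 (X 0 ^ 2 * X 1 ^ 2) (X 0 ^ 5 + X 1 ^ 5)
    (mul_ne_zero (pow_ne_zero 2 (EDP.X_ne_zero _))
      (pow_ne_zero 2 (EDP.X_ne_zero _))) (AdjoinRoot.root (poly k)) hz ?_ ?_
    (AdjoinRoot.liftAlgHom (poly k) (Algebra.ofId _ _)
      (AdjoinRoot.root (poly k) + algebraMap (MvPowerSeries (Fin 2) k) (AdjoinRoot (poly k)) (X 0 ^ 2 * X 1 ^ 2)) ?_) ?_ key_dvd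
  · intro s
    obtain ⟨f, rfl⟩ := AdjoinRoot.mk_surjective s
    refine ⟨(f %ₘ poly k).coeff 0, (f %ₘ poly k).coeff 1, ?_⟩
    have h1 : AdjoinRoot.mk (poly k) f = AdjoinRoot.mk (poly k) (f %ₘ poly k) := by
      rw [AdjoinRoot.mk_eq_mk, Polynomial.modByMonic_eq_sub_mul_div]
      exact ⟨f /ₘ poly k, by ring⟩
    have h3 : (f %ₘ poly k).natDegree ≤ 1 := by
      have := Polynomial.natDegree_modByMonic_lt f poly_monic
        (by intro h; have := poly_natDegree (k := k); rw [h] at this; simp at this)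
      rw [poly_natDegree] at this; omega
    rw [h1]
    conv_lhs => rw [Polynomial.eq_X_add_C_of_natDegree_le_one h3]
    simp [AdjoinRoot.algebraMap_eq]
    ring
  · exact AdjoinRoot.of.injective_of_degree_ne_zero (by
      rw [Polynomial.degree_eq_natDegree poly_monic.ne_zero, poly_natDegree]; norm_num)
  · rw [poly_eval]
    change (AdjoinRoot.root (poly k) + algebraMap (MvPowerSeries (Fin 2) k) (AdjoinRoot (poly k)) (X 0 ^ 2 * X 1 ^ 2)) ^ 2 +
      algebraMap (MvPowerSeries (Fin 2) k) (AdjoinRoot (poly k)) (X 0 ^ 2 * X 1 ^ 2) * (AdjoinRoot.root (poly k)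
        + algebraMap (MvPowerSeries (Fin 2) k) (AdjoinRoot (poly k)) (X 0 ^ 2 * X 1 ^ 2)) +
      algebraMap (MvPowerSeries (Fin 2) k) (AdjoinRoot (poly k)) (X 0 ^ 5 + X 1 ^ 5) = 0
    linear_combination hz + (algebraMap (MvPowerSeries (Fin 2) k) (AdjoinRoot (poly k)) (X 0 ^ 2 * X 1 ^ 2) *
      AdjoinRoot.root (poly k) + algebraMap (MvPowerSeries (Fin 2) k) (AdjoinRoot (poly k)) (X 0 ^ 2 * X 1 ^ 2) ^ 2) * h2S
  · simp

lemma poly_dist : (poly k).IsDistinguishedAt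
    (Ideal.span (Set.range (X : Fin 2 → MvPowerSeries (Fin 2) k))) := by
  have hX : ∀ i, (X i : MvPowerSeries (Fin 2) k) ∈
    Ideal.span (Set.range (X : Fin 2 → MvPowerSeries (Fin 2) k)) := fun i =>
      Ideal.subset_span ⟨i, rfl⟩
  refine ⟨⟨fun {n} hn => ?_⟩, poly_monic⟩
  rw [poly_natDegree] at hn
  interval_cases n
  · simp only [poly, Polynomial.coeff_add, Polynomial.coeff_X_pow, Polynomial.coeff_C_mul,
      Polynomial.coeff_X, Polynomial.coeff_C]
    simpa using Ideal.add_mem _ (Ideal.pow_mem_of_mem _ (hX 0) 5 (by norm_num))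
      (Ideal.pow_mem_of_mem _ (hX 1) 5 (by norm_num))
  · simp only [poly, Polynomial.coeff_add, Polynomial.coeff_X_pow, Polynomial.coeff_C_mul,
      Polynomial.coeff_X, Polynomial.coeff_C]
    simpa using Ideal.mul_mem_left _ (X 0 ^ 2) (Ideal.pow_mem_of_mem _ (hX 1) 2 (by norm_num))

/-- `k[[x,y,z]] = k[[x,y]][[z]]`. -/
noncomputable def eqv (k : Type*) [Field k] :
    MvPowerSeries (Fin 3) k ≃ₐ[k] PowerSeries (MvPowerSeries (Fin 2) k) :=
  (MvPowerSeries.renameEquiv k (finRotate 3)).trans (MvPowerSeries.finSuccEquiv k 2)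

lemma eqv_2 : eqv k (X 2) = PowerSeries.X := by
  have : finRotate 3 2 = 0 := by decide
  simp [eqv, this]

lemma eqv_0 : eqv k (X 0) = PowerSeries.C (X 0) := by
  have : finRotate 3 0 = Fin.succ 0 := by decide
  have h : MvPowerSeries.renameEquiv k (finRotate 3) (X 0) = X (Fin.succ 0) := by
    rw [← this]; simp
  rw [eqv, AlgEquiv.trans_apply, h, finSuccEquiv_X_succ]

lemma eqv_1 : eqv k (X 1) = PowerSeries.C (X 1) := by
  have : finRotate 3 1 = Fin.succ 1 := by decide
  have h : MvPowerSeries.renameEquiv k (finRotate 3) (X 1) = X (Fin.succ 1) := by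
    rw [← this]; simp
  rw [eqv, AlgEquiv.trans_apply, h, finSuccEquiv_X_succ]

end PS
end EDP

open EDP in
/-- For a field `k` of characteristic 2, the elliptic double point
`EDP_{4,4}^{(1)}`, i.e. `R = k[[x,y,z]]/(z² + zx²y² + x⁵ + y⁵)`, is a normal domain
(a domain which is integrally closed), and the origin is a double point: the defining
series lies in `m²` but not `m³`, where `m = (x, y, z)` is the maximal ideal
(so the multiplicity of the maximal ideal of `R` is 2). -/
theorem stmt10 (k : Type*) [Field k] [CharP k 2]
    (F : MvPowerSeries (Fin 3) k)
    (hF : F = (X 2 : MvPowerSeries (Fin 3) k) ^ 2 + X 2 * X 0 ^ 2 * X 1 ^ 2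
      + X 0 ^ 5 + X 1 ^ 5)
    (m : Ideal (MvPowerSeries (Fin 3) k))
    (hm : m = Ideal.span {(X 0 : MvPowerSeries (Fin 3) k), X 1, X 2}) :
    IsDomain (MvPowerSeries (Fin 3) k ⧸ Ideal.span {F}) ∧
    IsIntegrallyClosed (MvPowerSeries (Fin 3) k ⧸ Ideal.span {F}) ∧
    F ∈ m ^ 2 ∧ F ∉ m ^ 3 := by
  have heF : eqv k F = (poly k : PowerSeries (MvPowerSeries (Fin 2) k)) := by
    rw [hF]
    simp only [map_add, map_mul, map_pow, eqv_0, eqv_1, eqv_2, poly, Polynomial.coe_add,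
      Polynomial.coe_mul, Polynomial.coe_pow, Polynomial.coe_X, Polynomial.coe_C]
    ring
  let E : AdjoinRoot (poly k) ≃+* (MvPowerSeries (Fin 3) k ⧸ Ideal.span {F}) :=
    (poly_dist (k := k)).algEquivQuotient.toRingEquiv.trans
      (Ideal.quotientEquiv _ _ (eqv k).toRingEquiv (by
        rw [Ideal.map_span, Set.image_singleton]
        simp [heF])).symm
  have hX : X 0 ∈ m ∧ X 1 ∈ m ∧ X 2 ∈ m := by
    subst hm
    exact ⟨Ideal.subset_span (by simp), Ideal.subset_span (by simp), Ideal.subset_span (by simp)⟩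
  obtain ⟨h0, h1, h2⟩ := hX
  refine ⟨E.symm.toMulEquiv.isDomain _, ?_, ?_, ?_⟩
  · have := adjoin_closed (k := k)
    exact IsIntegrallyClosed.of_equiv E
  · rw [hF]
    refine Ideal.add_mem _ (Ideal.add_mem _ (Ideal.add_mem _ (Ideal.pow_mem_pow h2 2) ?_) ?_) ?_
    · exact Ideal.mul_mem_left _ _ (Ideal.pow_mem_pow h1 2)
    · exact Ideal.pow_le_pow_right (by norm_num) (Ideal.pow_mem_pow h0 5)
    · exact Ideal.pow_le_pow_right (by norm_num) (Ideal.pow_mem_pow h1 5)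
  · intro hF3
    let ψ : MvPowerSeries (Fin 3) k →+* PowerSeries k :=
      (PowerSeries.map (MvPowerSeries.constantCoeff (σ := Fin 2) (R := k))).comp
        (eqv k : MvPowerSeries (Fin 3) k →+* _)
    have p0 : ψ (X 0) = 0 := by simp [ψ, eqv_0]
    have p1 : ψ (X 1) = 0 := by simp [ψ, eqv_1]
    have p2 : ψ (X 2) = PowerSeries.X := by simp [ψ, eqv_2]
    have hle : m.map ψ ≤ Ideal.span {PowerSeries.X} := by
      rw [hm, Ideal.map_span, Ideal.span_le]
      rintro _ ⟨f, hf, rfl⟩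
      simp only [Set.mem_insert_iff, Set.mem_singleton_iff] at hf
      rcases hf with rfl | rfl | rfl
      · simp [p0]
      · simp [p1]
      · rw [p2]; exact Ideal.mem_span_singleton_self _
    have h3 : ψ F ∈ Ideal.span {(PowerSeries.X : PowerSeries k) ^ 3} := by
      rw [← Ideal.span_singleton_pow]
      refine Ideal.pow_right_mono hle 3 ?_
      rw [← Ideal.map_pow]
      exact Ideal.mem_map_of_mem _ hF3
    have hψF : ψ F = PowerSeries.X ^ 2 := by
      rw [hF]; simp [p0, p1, p2]
    rw [hψF, Ideal.mem_span_singleton, PowerSeries.X_pow_dvd_iff] at h3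
    have := h3 2 (by norm_num)
    simp [PowerSeries.coeff_X_pow] at this
end

section
/- Let k be a field of characteristic 2 and let S = k[[u,v]] with an action of Z/2Z = {1, g} that is free outside the closed point. Set x = u·g(u), y = v·g(v), z = u·g(v) + g(u)·v, a = u + g(u), b = v + g(v). Then the invariant ring S^G equals k[[x,y,z]]/(z² + abz + a²y + b²x), where a, b are expressed as power series in x, y, z. -/
open MvPowerSeries


/-- The subalgebra of elements fixed by an algebra endomorphism `g`. -/
def fixedSubalgebra {k S : Type*} [CommSemiring k] [CommRing S] [Algebra k S]
    (g : S →ₐ[k] S) : Subalgebra k S where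
  carrier := {s | g s = s}
  mul_mem' := by
    intro a b ha hb
    simp only [Set.mem_setOf_eq, map_mul] at *
    rw [ha, hb]
  add_mem' := by
    intro a b ha hb
    simp only [Set.mem_setOf_eq, map_add] at *
    rw [ha, hb]
  algebraMap_mem' := by
    intro r
    simp [Set.mem_setOf_eq]


section


section Filtration
variable {σ τ k : Type*} [Field k]

/-- The power series with given coefficients. -/
def mkPS (f : (σ →₀ ℕ) → k) : MvPowerSeries σ k := f

theorem coeff_mkPS (f : (σ →₀ ℕ) → k) (d : σ →₀ ℕ) : coeff d (mkPS f) = f d := rfl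

/-- The ideal of power series of order at least `n`. -/
def fil (σ k : Type*) [Field k] (n : ℕ) : Ideal (MvPowerSeries σ k) where
  carrier := {s | ∀ d : σ →₀ ℕ, d.degree < n → coeff d s = 0}
  zero_mem' := by intro d _; simp
  add_mem' := by
    intro a b ha hb d hd
    rw [map_add, ha d hd, hb d hd, add_zero]
  smul_mem' := by
    classical
    intro c s hs d hd
    rw [smul_eq_mul, coeff_mul]
    refine Finset.sum_eq_zero fun p hp => ?_
    rw [Finset.HasAntidiagonal.mem_antidiagonal] at hp
    rw [hs p.2, mul_zero]
    have := congrArg Finsupp.degree hp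
    rw [map_add] at this
    omega

theorem mem_fil {n : ℕ} {s : MvPowerSeries σ k} :
    s ∈ fil σ k n ↔ ∀ d : σ →₀ ℕ, d.degree < n → coeff d s = 0 := Iff.rfl

theorem fil_mul {m n : ℕ} {s t : MvPowerSeries σ k} (hs : s ∈ fil σ k m) (ht : t ∈ fil σ k n) :
    s * t ∈ fil σ k (m + n) := by
  classical
  intro d hd
  rw [coeff_mul]
  refine Finset.sum_eq_zero fun p hp => ?_
  rw [Finset.HasAntidiagonal.mem_antidiagonal] at hp
  have := congrArg Finsupp.degree hp
  rw [map_add] at this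
  by_cases h : p.1.degree < m
  · rw [hs _ h, zero_mul]
  · rw [ht _ (by omega), mul_zero]

theorem fil_le {m n : ℕ} (h : m ≤ n) : fil σ k n ≤ fil σ k m :=
  fun _ hs d hd => hs d (by omega)

theorem mem_fil_zero (s : MvPowerSeries σ k) : s ∈ fil σ k 0 := fun d hd => by omega

theorem eq_zero_of_fil {s : MvPowerSeries σ k} (h : ∀ n, s ∈ fil σ k n) : s = 0 := by
  ext d
  rw [h (d.degree + 1) d (by omega), map_zero]

theorem mem_fil_one {s : MvPowerSeries σ k} : s ∈ fil σ k 1 ↔ constantCoeff s = 0 := by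
  constructor
  · intro h
    rw [← coeff_zero_eq_constantCoeff_apply]
    exact h 0 (by simp)
  · intro h d hd
    have : d = 0 := by
      rw [← Finsupp.degree_eq_zero_iff]; omega
    rw [this, coeff_zero_eq_constantCoeff_apply, h]

theorem X_mem_fil (i : σ) : (X i : MvPowerSeries σ k) ∈ fil σ k 1 := by
  rw [mem_fil_one, constantCoeff_X]

theorem fil_decomp [Fintype σ] {n : ℕ} {s : MvPowerSeries σ k} (hs : s ∈ fil σ k (n + 1)) :
    ∃ t : σ → MvPowerSeries σ k, (∀ i, t i ∈ fil σ k n) ∧ s = ∑ i, X i * t i := by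
  classical
  have hch : ∀ d : σ →₀ ℕ, ∃ o : Option σ, (∀ i, o = some i → d i ≠ 0) ∧ (o = none → d = 0) := by
    intro d
    by_cases h : d = 0
    · exact ⟨none, by simp, fun _ => h⟩
    · obtain ⟨i, hi⟩ := Finsupp.ne_iff.mp h
      exact ⟨some i, by rintro j hj; cases hj; simpa using hi, by simp⟩
  choose o ho1 ho2 using hch
  refine ⟨fun i => mkPS fun d => if o (d + Finsupp.single i 1) = some i then
    coeff (d + Finsupp.single i 1) s else 0, ?_, ?_⟩
  · intro i d hd
    rw [coeff_mkPS]
    split_ifs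
    · apply hs
      rw [map_add, Finsupp.degree_single]; omega
    · rfl
  · ext d
    rw [map_sum]
    have key : ∀ i, coeff d (X i * (mkPS fun d => if o (d + Finsupp.single i 1) = some i then
        coeff (d + Finsupp.single i 1) s else 0)) =
        if o d = some i then coeff d s else 0 := by
      intro i
      rw [X_def, coeff_monomial_mul]
      by_cases hle : Finsupp.single i 1 ≤ d
      · rw [if_pos hle, one_mul, coeff_mkPS, tsub_add_cancel_of_le hle]
      · rw [if_neg hle, if_neg]
        intro h
        apply hle
        rw [Finsupp.single_le_iff]
        have := ho1 d i h
        omega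
    simp_rw [key]
    rcases h : o d with _ | i
    · simp only [reduceCtorEq, if_false, Finset.sum_const_zero]
      rw [ho2 d h]
      exact hs 0 (by simp)
    · simp

theorem decomp [Fintype σ] (s : MvPowerSeries σ k) :
    ∃ t : σ → MvPowerSeries σ k, s = C (constantCoeff s) + ∑ i, X i * t i := by
  have : s - C (constantCoeff s) ∈ fil σ k (0 + 1) := by
    rw [zero_add, mem_fil_one]; simp
  obtain ⟨t, -, ht⟩ := fil_decomp this
  exact ⟨t, by rw [← ht]; ring⟩

theorem algHom_C (φ : MvPowerSeries σ k →ₐ[k] MvPowerSeries τ k) (c : k) : φ (C c) = C c :=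
  φ.commutes c

theorem algHom_fil [Fintype σ] (φ : MvPowerSeries σ k →ₐ[k] MvPowerSeries τ k) (p : ℕ)
    (hφ : ∀ i, φ (X i) ∈ fil τ k p) (n : ℕ) :
    ∀ s ∈ fil σ k n, φ s ∈ fil τ k (p * n) := by
  induction n with
  | zero => intro s _; exact mem_fil_zero _
  | succ n ih =>
    intro s hs
    obtain ⟨t, ht, rfl⟩ := fil_decomp hs
    rw [map_sum]
    refine Ideal.sum_mem _ fun i _ => ?_
    rw [map_mul]
    exact fil_le (le_of_eq (by ring)) (fil_mul (hφ i) (ih _ (ht i)))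

theorem algHom_ext_fil [Fintype σ] (φ ψ : MvPowerSeries σ k →ₐ[k] MvPowerSeries τ k)
    (hφ : ∀ i, φ (X i) ∈ fil τ k 1) (h : ∀ i, φ (X i) = ψ (X i)) : φ = ψ := by
  have key : ∀ n, ∀ s, φ s - ψ s ∈ fil τ k n := by
    intro n
    induction n with
    | zero => intro s; exact mem_fil_zero _
    | succ n ih =>
      intro s
      obtain ⟨t, ht⟩ := decomp s
      rw [ht, map_add, map_add, algHom_C, algHom_C, add_sub_add_left_eq_sub, map_sum, map_sum,
        ← Finset.sum_sub_distrib]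
      refine Ideal.sum_mem _ fun i _ => ?_
      rw [map_mul, map_mul, ← h i, ← mul_sub, add_comm]
      exact fil_mul (hφ i) (ih _)
  ext1 s
  exact sub_eq_zero.mp (eq_zero_of_fil fun n => key n s)

theorem algHom_diff [Fintype σ] (φ ψ : MvPowerSeries σ k →ₐ[k] MvPowerSeries τ k)
    (hφ : ∀ i, φ (X i) ∈ fil τ k 2) (hψ : ∀ i, ψ (X i) ∈ fil τ k 2)
    (h : ∀ i, φ (X i) - ψ (X i) ∈ fil τ k 3) (n : ℕ) :
    ∀ s ∈ fil σ k n, φ s - ψ s ∈ fil τ k (2 * n + 1) := by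
  induction n with
  | zero =>
    intro s _
    obtain ⟨t, ht⟩ := decomp s
    rw [ht, map_add, map_add, algHom_C, algHom_C, add_sub_add_left_eq_sub, map_sum, map_sum]
    refine Ideal.sub_mem _ (Ideal.sum_mem _ fun i _ => ?_) (Ideal.sum_mem _ fun i _ => ?_)
    · rw [map_mul]
      exact Ideal.mul_mem_right _ _ (fil_le (by omega) (hφ i))
    · rw [map_mul]
      exact Ideal.mul_mem_right _ _ (fil_le (by omega) (hψ i))
  | succ n ih =>
    intro s hs
    obtain ⟨t, ht, rfl⟩ := fil_decomp hs
    rw [map_sum, map_sum, ← Finset.sum_sub_distrib]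
    refine Ideal.sum_mem _ fun i _ => ?_
    have e : φ (X i * t i) - ψ (X i * t i) =
        (φ (X i) - ψ (X i)) * φ (t i) + ψ (X i) * (φ (t i) - ψ (t i)) := by
      rw [map_mul, map_mul]; ring
    rw [e]
    refine Ideal.add_mem _ ?_ ?_
    · exact fil_le (by omega) (fil_mul (h i) (algHom_fil φ 2 hφ n _ (ht i)))
    · exact fil_le (by omega) (fil_mul (hψ i) (ih _ (ht i)))

theorem exists_limit (f : ℕ → MvPowerSeries σ k) (hf : ∀ n, f (n + 1) - f n ∈ fil σ k n) :
    ∃ F : MvPowerSeries σ k, ∀ n, F - f n ∈ fil σ k n := by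
  have hstep : ∀ n m, n ≤ m → f m - f n ∈ fil σ k n := by
    intro n m h
    induction m, h using Nat.le_induction with
    | base => simp
    | succ m hm ih =>
      have : f (m + 1) - f n = (f (m + 1) - f m) + (f m - f n) := by ring
      rw [this]
      exact Ideal.add_mem _ (fil_le hm (hf m)) ih
  refine ⟨mkPS fun d => coeff d (f (d.degree + 1)), fun n d hd => ?_⟩
  rw [map_sub, coeff_mkPS]
  have := hstep (d.degree + 1) n (by omega) d (by omega)
  rw [map_sub] at this
  rw [← neg_sub, this, neg_zero]

theorem bij_of_fil (Φ : MvPowerSeries σ k →+ MvPowerSeries σ k)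
    (h : ∀ n, ∀ s ∈ fil σ k n, Φ s - s ∈ fil σ k (n + 1)) : Function.Bijective Φ := by
  have hΦ : ∀ n, ∀ s ∈ fil σ k n, Φ s ∈ fil σ k n := fun n s hs => by
    have := Ideal.add_mem _ (fil_le (Nat.le_succ n) (h n s hs)) hs
    simpa using this
  constructor
  · rw [injective_iff_map_eq_zero]
    intro s hs
    apply eq_zero_of_fil
    intro n
    induction n with
    | zero => exact mem_fil_zero _
    | succ n ih =>
      have := h n s ih
      rw [hs, zero_sub] at this
      simpa using this
  · intro s
    let T : ℕ → MvPowerSeries σ k := fun n => Nat.rec 0 (fun _ t => t + (s - Φ t)) n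
    have hT : ∀ n, T (n + 1) = T n + (s - Φ (T n)) := fun n => rfl
    have hres : ∀ n, s - Φ (T n) ∈ fil σ k n := by
      intro n
      induction n with
      | zero => exact mem_fil_zero _
      | succ n ih =>
        have e : s - Φ (T (n + 1)) = - (Φ (s - Φ (T n)) - (s - Φ (T n))) := by
          rw [hT, map_add]; ring
        rw [e]
        exact neg_mem (h n _ ih)
    obtain ⟨F, hF⟩ := exists_limit T (fun n => by rw [hT, add_sub_cancel_left]; exact hres n)
    refine ⟨F, sub_eq_zero.mp (eq_zero_of_fil fun n => ?_)⟩
    have e : Φ F - s = Φ (F - T n) - (s - Φ (T n)) := by rw [map_sub]; ring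
    rw [e]
    exact Ideal.sub_mem _ (hΦ n _ (hF n)) (hres n)

theorem surj_of_decomp [Fintype σ] (θ : MvPowerSeries σ k →ₐ[k] MvPowerSeries τ k)
    (hθ : ∀ i, θ (X i) ∈ fil τ k 1) (G : Set (MvPowerSeries τ k))
    (hG : ∀ s ∈ G, ∃ (c : k) (t : σ → MvPowerSeries τ k), (∀ i, t i ∈ G) ∧
      s = C c + ∑ i, θ (X i) * t i) :
    ∀ s ∈ G, ∃ F, θ F = s := by
  have hG' : ∀ s : G, ∃ (c : k) (t : σ → G), (s : MvPowerSeries τ k) =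
      C c + ∑ i, θ (X i) * (t i : MvPowerSeries τ k) := by
    rintro ⟨s, hs⟩
    obtain ⟨c, t, ht, e⟩ := hG s hs
    exact ⟨c, fun i => ⟨t i, ht i⟩, e⟩
  choose c t hct using hG'
  let f : ℕ → G → MvPowerSeries σ k := fun n =>
    Nat.rec (fun _ => 0) (fun _ F s => C (c s) + ∑ i, X i * F (t s i)) n
  have hf : ∀ n s, f (n + 1) s = C (c s) + ∑ i, X i * f n (t s i) := fun n s => rfl
  have hcau : ∀ n s, f (n + 1) s - f n s ∈ fil σ k n := by
    intro n
    induction n with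
    | zero => intro s; exact mem_fil_zero _
    | succ n ih =>
      intro s
      rw [hf (n + 1), hf n, add_sub_add_left_eq_sub, ← Finset.sum_sub_distrib]
      refine Ideal.sum_mem _ fun i _ => ?_
      rw [← mul_sub]
      exact fil_le (by omega) (fil_mul (X_mem_fil i) (ih _))
  have happ : ∀ n (s : G), θ (f n s) - (s : MvPowerSeries τ k) ∈ fil τ k n := by
    intro n
    induction n with
    | zero => intro s; exact mem_fil_zero _
    | succ n ih =>
      intro s
      rw [hf n, map_add, algHom_C, map_sum]
      conv in (s : MvPowerSeries τ k) => rw [hct s]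
      rw [add_sub_add_left_eq_sub, ← Finset.sum_sub_distrib]
      refine Ideal.sum_mem _ fun i _ => ?_
      rw [map_mul, ← mul_sub, add_comm]
      exact fil_mul (hθ i) (ih _)
  intro s hs
  obtain ⟨F, hF⟩ := exists_limit (fun n => f n ⟨s, hs⟩) (fun n => hcau n _)
  refine ⟨F, sub_eq_zero.mp (eq_zero_of_fil fun n => ?_)⟩
  have e : θ F - s = θ (F - f n ⟨s, hs⟩) + (θ (f n ⟨s, hs⟩) - s) := by rw [map_sub]; ring
  rw [e]
  refine Ideal.add_mem _ ?_ (happ n ⟨s, hs⟩)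
  have := algHom_fil θ 1 hθ n _ (hF n)
  rwa [one_mul] at this

end Filtration

end


section


section Parity
variable {k : Type*} [Field k]

/-- The exponent `(p, q)`. -/
noncomputable def ee (p q : ℕ) : Fin 2 →₀ ℕ := Finsupp.single 0 p + Finsupp.single 1 q

theorem ee_zero (p q : ℕ) : ee p q 0 = p := by simp [ee]
theorem ee_one (p q : ℕ) : ee p q 1 = q := by simp [ee]
theorem ee_degree (p q : ℕ) : (ee p q).degree = p + q := by
  rw [ee, map_add, Finsupp.degree_single, Finsupp.degree_single]
theorem monomial_ee (p q : ℕ) :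
    (monomial (ee p q) 1 : MvPowerSeries (Fin 2) k) = X 0 ^ p * X 1 ^ q := by
  rw [X_pow_eq, X_pow_eq, monomial_mul_monomial, one_mul, ee]

/-- The parity part of a power series. -/
noncomputable def part (p q : ℕ) : MvPowerSeries (Fin 2) k →+ MvPowerSeries (Fin 2) k where
  toFun s := mkPS fun d => coeff (2 • d + ee p q) s
  map_zero' := by ext d; simp [coeff_mkPS]
  map_add' := by intro a b; ext d; simp [coeff_mkPS]

theorem coeff_part (p q : ℕ) (s : MvPowerSeries (Fin 2) k) (d : Fin 2 →₀ ℕ) :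
    coeff d (part p q s) = coeff (2 • d + ee p q) s := rfl

theorem coeff_exp_mul (P : MvPowerSeries (Fin 2) k) (d : Fin 2 →₀ ℕ) (p q p' q' : ℕ)
    (hp : p < 2) (hq : q < 2) (hp' : p' < 2) (hq' : q' < 2) :
    coeff (2 • d + ee p q) (expand 2 two_ne_zero P * (X 0 ^ p' * X 1 ^ q')) =
      if p = p' ∧ q = q' then coeff d P else 0 := by
  classical
  rw [← monomial_ee, coeff_mul_monomial]
  split_ifs with h1 h2 h2
  · rw [h2.1, h2.2, add_tsub_cancel_right, coeff_expand_smul, mul_one]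
  · rw [mul_one]
    by_cases hpp : p = p'
    · apply coeff_expand_of_not_dvd (i := 1)
      have h3 := h1 1
      simp only [Finsupp.coe_add, Finsupp.coe_smul, Pi.add_apply, Pi.smul_apply, smul_eq_mul,
        ee_one, Finsupp.coe_tsub, Pi.sub_apply] at h3 ⊢
      omega
    · apply coeff_expand_of_not_dvd (i := 0)
      have h3 := h1 0
      simp only [Finsupp.coe_add, Finsupp.coe_smul, Pi.add_apply, Pi.smul_apply, smul_eq_mul,
        ee_zero, Finsupp.coe_tsub, Pi.sub_apply] at h3 ⊢
      omega
  · exfalso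
    apply h1
    rw [h2.1, h2.2]
    exact le_add_self
  · rfl

theorem part_exp_mul (P : MvPowerSeries (Fin 2) k) (p q p' q' : ℕ)
    (hp : p < 2) (hq : q < 2) (hp' : p' < 2) (hq' : q' < 2) :
    part p q (expand 2 two_ne_zero P * (X 0 ^ p' * X 1 ^ q')) =
      if p = p' ∧ q = q' then P else 0 := by
  ext d
  rw [coeff_part, coeff_exp_mul P d p q p' q' hp hq hp' hq']
  split_ifs <;> simp

theorem sum_parts (s : MvPowerSeries (Fin 2) k) :
    s = expand 2 two_ne_zero (part 0 0 s) * (X 0 ^ 0 * X 1 ^ 0)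
      + expand 2 two_ne_zero (part 1 0 s) * (X 0 ^ 1 * X 1 ^ 0)
      + expand 2 two_ne_zero (part 0 1 s) * (X 0 ^ 0 * X 1 ^ 1)
      + expand 2 two_ne_zero (part 1 1 s) * (X 0 ^ 1 * X 1 ^ 1) := by
  ext d
  obtain ⟨d', p, q, hp, hq, rfl⟩ : ∃ (d' : Fin 2 →₀ ℕ) (p q : ℕ), p < 2 ∧ q < 2 ∧
      d = 2 • d' + ee p q := by
    refine ⟨ee (d 0 / 2) (d 1 / 2), d 0 % 2, d 1 % 2, Nat.mod_lt _ two_pos, Nat.mod_lt _ two_pos, ?_⟩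
    ext i
    fin_cases i
    · simp [ee_zero]; omega
    · simp [ee_one]; omega
  simp only [map_add]
  rw [coeff_exp_mul _ _ _ _ _ _ hp hq (by omega) (by omega),
    coeff_exp_mul _ _ _ _ _ _ hp hq (by omega) (by omega),
    coeff_exp_mul _ _ _ _ _ _ hp hq (by omega) (by omega),
    coeff_exp_mul _ _ _ _ _ _ hp hq (by omega) (by omega)]
  simp only [coeff_part]
  interval_cases p <;> interval_cases q <;> simp

theorem part_fil (p q n : ℕ) (s : MvPowerSeries (Fin 2) k) (hs : s ∈ fil (Fin 2) k n) :
    part p q s ∈ fil (Fin 2) k ((n + 1 - (p + q)) / 2) := by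
  intro d hd
  rw [coeff_part]
  apply hs
  rw [map_add, ee_degree, map_nsmul, smul_eq_mul]
  omega

theorem expand_X_fil (i : Fin 2) :
    expand 2 two_ne_zero (X i : MvPowerSeries (Fin 2) k) ∈ fil (Fin 2) k 2 := by
  rw [expand_X, pow_two]
  exact fil_mul (X_mem_fil i) (X_mem_fil i)

/-- The comparison map. -/
noncomputable def cmpr (ρ : MvPowerSeries (Fin 2) k →ₐ[k] MvPowerSeries (Fin 2) k)
    (e : MvPowerSeries (Fin 2) k) : MvPowerSeries (Fin 2) k →+ MvPowerSeries (Fin 2) k where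
  toFun s := ρ (part 0 0 s) + ρ (part 1 0 s) * X 0 + ρ (part 0 1 s) * X 1 + ρ (part 1 1 s) * e
  map_zero' := by simp
  map_add' := by intro a b; simp only [map_add]; ring

theorem cmpr_apply (ρ : MvPowerSeries (Fin 2) k →ₐ[k] MvPowerSeries (Fin 2) k)
    (e s : MvPowerSeries (Fin 2) k) : cmpr ρ e s =
    ρ (part 0 0 s) + ρ (part 1 0 s) * X 0 + ρ (part 0 1 s) * X 1 + ρ (part 1 1 s) * e := rfl

theorem cmpr_bij (ρ : MvPowerSeries (Fin 2) k →ₐ[k] MvPowerSeries (Fin 2) k)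
    (e : MvPowerSeries (Fin 2) k) (hρ : ∀ i, ρ (X i) - X i ^ 2 ∈ fil (Fin 2) k 3)
    (he : e - X 0 * X 1 ∈ fil (Fin 2) k 3) : Function.Bijective (cmpr ρ e) := by
  apply bij_of_fil
  intro n s hs
  have hρ2 : ∀ i, ρ (X i) ∈ fil (Fin 2) k 2 := fun i => by
    have := Ideal.add_mem _ (fil_le (by omega) (hρ i) : _ ∈ fil (Fin 2) k 2)
      (fil_mul (X_mem_fil i) (X_mem_fil i))
    rwa [pow_two, sub_add_cancel] at this
  have hd := algHom_diff ρ (expand 2 two_ne_zero) hρ2 expand_X_fil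
    (fun i => by rw [expand_X]; exact hρ i)
  have hXX : (X 0 * X 1 : MvPowerSeries (Fin 2) k) ∈ fil (Fin 2) k 2 :=
    fil_mul (X_mem_fil 0) (X_mem_fil 1)
  have h0 := hd _ _ (part_fil 0 0 n s hs)
  have h1 := fil_mul (hd _ _ (part_fil 1 0 n s hs)) (X_mem_fil 0)
  have h2 := fil_mul (hd _ _ (part_fil 0 1 n s hs)) (X_mem_fil 1)
  have h3 := fil_mul (hd _ _ (part_fil 1 1 n s hs)) hXX
  have h4 := fil_mul (algHom_fil ρ 2 hρ2 _ _ (part_fil 1 1 n s hs)) he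
  have key : cmpr ρ e s - s = (ρ (part 0 0 s) - expand 2 two_ne_zero (part 0 0 s))
      + (ρ (part 1 0 s) - expand 2 two_ne_zero (part 1 0 s)) * X 0
      + (ρ (part 0 1 s) - expand 2 two_ne_zero (part 0 1 s)) * X 1
      + (ρ (part 1 1 s) - expand 2 two_ne_zero (part 1 1 s)) * (X 0 * X 1)
      + ρ (part 1 1 s) * (e - X 0 * X 1) := by
    conv_lhs => rw [cmpr_apply]; arg 2; rw [sum_parts s]
    ring
  rw [key]
  refine Ideal.add_mem _ (Ideal.add_mem _ (Ideal.add_mem _ (Ideal.add_mem _ ?_ ?_) ?_) ?_) ?_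
  · exact fil_le (by omega) h0
  · exact fil_le (by omega) h1
  · exact fil_le (by omega) h2
  · exact fil_le (by omega) h3
  · exact fil_le (by omega) h4

theorem cmpr_span (ρ : MvPowerSeries (Fin 2) k →ₐ[k] MvPowerSeries (Fin 2) k)
    (e : MvPowerSeries (Fin 2) k) (hρ : ∀ i, ρ (X i) - X i ^ 2 ∈ fil (Fin 2) k 3)
    (he : e - X 0 * X 1 ∈ fil (Fin 2) k 3) (s : MvPowerSeries (Fin 2) k) :
    ∃ P Q R T, s = ρ P + ρ Q * X 0 + ρ R * X 1 + ρ T * e := by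
  obtain ⟨t, rfl⟩ := (cmpr_bij ρ e hρ he).2 s
  exact ⟨_, _, _, _, cmpr_apply ρ e t⟩

theorem cmpr_indep (ρ : MvPowerSeries (Fin 2) k →ₐ[k] MvPowerSeries (Fin 2) k)
    (hρ : ∀ i, ρ (X i) - X i ^ 2 ∈ fil (Fin 2) k 3) (P Q R : MvPowerSeries (Fin 2) k)
    (h : ρ P + ρ Q * X 0 + ρ R * X 1 = 0) : P = 0 ∧ Q = 0 ∧ R = 0 := by
  have hb := cmpr_bij ρ (X 0 * X 1) hρ (by simp)
  let s : MvPowerSeries (Fin 2) k := expand 2 two_ne_zero P * (X 0 ^ 0 * X 1 ^ 0)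
    + expand 2 two_ne_zero Q * (X 0 ^ 1 * X 1 ^ 0) + expand 2 two_ne_zero R * (X 0 ^ 0 * X 1 ^ 1)
  have p00 : part 0 0 s = P := by
    simp only [s, map_add]
    rw [part_exp_mul, part_exp_mul, part_exp_mul] <;> simp
  have p10 : part 1 0 s = Q := by
    simp only [s, map_add]
    rw [part_exp_mul, part_exp_mul, part_exp_mul] <;> simp
  have p01 : part 0 1 s = R := by
    simp only [s, map_add]
    rw [part_exp_mul, part_exp_mul, part_exp_mul] <;> simp
  have p11 : part 1 1 s = 0 := by
    simp only [s, map_add]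
    rw [part_exp_mul, part_exp_mul, part_exp_mul] <;> simp
  have hs : s = 0 := by
    apply hb.1
    rw [map_zero, cmpr_apply, p00, p10, p01, p11, h]
    simp
  refine ⟨?_, ?_, ?_⟩
  · rw [← p00, hs, map_zero]
  · rw [← p10, hs, map_zero]
  · rw [← p01, hs, map_zero]

end Parity

section Weierstrass
variable {k : Type*} [Field k]

/-- Embedding of two-variable series. -/
noncomputable def iot : MvPowerSeries (Fin 2) k →ₐ[k] MvPowerSeries (Fin 3) k :=
  rename (Fin.castSuccEmb (n := 2))

/-- The quotient by `Z ^ 2`. -/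
noncomputable def quo : MvPowerSeries (Fin 3) k →+ MvPowerSeries (Fin 3) k where
  toFun s := mkPS fun d => coeff (d + Finsupp.single 2 2) s
  map_zero' := by ext d; simp [coeff_mkPS]
  map_add' := by intro a b; ext d; simp [coeff_mkPS]

theorem coeff_quo (s : MvPowerSeries (Fin 3) k) (d : Fin 3 →₀ ℕ) :
    coeff d (quo s) = coeff (d + Finsupp.single 2 2) s := rfl

theorem coeff_sub_quo (s : MvPowerSeries (Fin 3) k) (d : Fin 3 →₀ ℕ) (hd : 2 ≤ d 2) :
    coeff d (s - quo s * X 2 ^ 2) = 0 := by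
  classical
  have hle : Finsupp.single 2 2 ≤ d := by rwa [Finsupp.single_le_iff]
  rw [X_pow_eq, map_sub, coeff_mul_monomial, if_pos hle, coeff_quo, tsub_add_cancel_of_le hle]
  ring

theorem low_deg (s : MvPowerSeries (Fin 3) k) (hs : ∀ d : Fin 3 →₀ ℕ, 2 ≤ d 2 → coeff d s = 0) :
    ∃ P Q : MvPowerSeries (Fin 2) k, s = iot P + iot Q * X 2 := by
  classical
  have hemb : ∀ d' : Fin 2 →₀ ℕ, (d'.embDomain (Fin.castSuccEmb (n := 2))) 2 = 0 := by
    intro d'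
    apply Finsupp.embDomain_of_notMem_range
    rintro ⟨i, hi⟩
    fin_cases i <;> simp at hi
  have hex : ∀ d : Fin 3 →₀ ℕ, d 2 = 0 → ∃ d' : Fin 2 →₀ ℕ,
      d = d'.embDomain (Fin.castSuccEmb (n := 2)) := by
    intro d hd
    refine ⟨ee (d 0) (d 1), ?_⟩
    ext i
    fin_cases i
    · have := Finsupp.embDomain_apply_self (Fin.castSuccEmb (n := 2)) (ee (d 0) (d 1)) 0
      rw [ee_zero] at this
      exact this.symm
    · have := Finsupp.embDomain_apply_self (Fin.castSuccEmb (n := 2)) (ee (d 0) (d 1)) 1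
      rw [ee_one] at this
      exact this.symm
    · exact hd.trans (hemb _).symm
  have hz : ∀ (P : MvPowerSeries (Fin 2) k) (d : Fin 3 →₀ ℕ), d 2 ≠ 0 → coeff d (iot P) = 0 := by
    intro P d hd
    apply coeff_rename_eq_zero
    rintro ⟨d', rfl⟩
    apply hd
    rw [← Finsupp.embDomain_eq_mapDomain]
    exact hemb d'
  refine ⟨mkPS fun d => coeff (d.embDomain (Fin.castSuccEmb (n := 2))) s,
    mkPS fun d => coeff (d.embDomain (Fin.castSuccEmb (n := 2)) + Finsupp.single 2 1) s, ?_⟩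
  ext d
  rw [map_add, X_def, coeff_mul_monomial]
  by_cases h0 : d 2 = 0
  · obtain ⟨d', rfl⟩ := hex d h0
    rw [if_neg, add_zero, iot, coeff_embDomain_rename, coeff_mkPS]
    rw [Finsupp.single_le_iff]; omega
  · rw [hz _ _ h0, zero_add, if_pos (by rw [Finsupp.single_le_iff]; omega), mul_one]
    by_cases h1 : d 2 = 1
    · obtain ⟨d', hd'⟩ := hex (d - Finsupp.single 2 1) (by simp [h1])
      rw [hd', iot, coeff_embDomain_rename, coeff_mkPS, ← hd', tsub_add_cancel_of_le]
      rw [Finsupp.single_le_iff]; omega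
    · rw [hs d (by omega), hz]
      simp; omega

theorem weier (f : MvPowerSeries (Fin 3) k) (hf : f - X 2 ^ 2 ∈ fil (Fin 3) k 3)
    (h : MvPowerSeries (Fin 3) k) :
    ∃ (P Q : MvPowerSeries (Fin 2) k) (q : MvPowerSeries (Fin 3) k),
      h = iot P + iot Q * X 2 + q * f := by
  let Φ : MvPowerSeries (Fin 3) k →+ MvPowerSeries (Fin 3) k :=
    { toFun := fun s => s + quo s * (f - X 2 ^ 2)
      map_zero' := by simp
      map_add' := by intro a b; simp only [map_add]; ring }
  have hΦ : ∀ s, Φ s = s + quo s * (f - X 2 ^ 2) := fun s => rfl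
  have hb : Function.Bijective Φ := by
    apply bij_of_fil
    intro n s hs
    rw [hΦ, add_sub_cancel_left]
    have hq : quo s ∈ fil (Fin 3) k (n - 2) := by
      intro d hd
      rw [coeff_quo]
      apply hs
      rw [map_add, Finsupp.degree_single]; omega
    exact fil_le (by omega) (fil_mul hq hf)
  obtain ⟨s, rfl⟩ := hb.2 h
  obtain ⟨P, Q, e⟩ := low_deg (s - quo s * X 2 ^ 2) (coeff_sub_quo s)
  refine ⟨P, Q, quo s, ?_⟩
  rw [← e, hΦ]; ring

end Weierstrass

end


section


section Free
variable {k : Type*} [Field k]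

theorem X_pow_mem_fil {σ : Type*} (i : σ) (n : ℕ) :
    (X i ^ n : MvPowerSeries σ k) ∈ fil σ k n := by
  induction n with
  | zero => exact mem_fil_zero _
  | succ n ih => rw [pow_succ]; exact fil_mul ih (X_mem_fil i)

theorem fil_le_span_pow (n : ℕ) :
    fil (Fin 2) k n ≤ (Ideal.span {(X 0 : MvPowerSeries (Fin 2) k), X 1}) ^ n := by
  induction n with
  | zero => simp
  | succ n ih =>
    intro s hs
    obtain ⟨t, ht, rfl⟩ := fil_decomp hs
    refine Ideal.sum_mem _ fun i _ => ?_
    rw [pow_succ']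
    refine Ideal.mul_mem_mul (Ideal.subset_span ?_) (ih (ht i))
    fin_cases i <;> simp

theorem X_pow_dvd_of {i j : Fin 2} (hij : i ≠ j) (N : ℕ) (e : MvPowerSeries (Fin 2) k)
    (h : (X i ^ N : MvPowerSeries (Fin 2) k) ∣ X j ^ N * e) :
    (X i ^ N : MvPowerSeries (Fin 2) k) ∣ e := by
  classical
  rw [X_pow_dvd_iff] at h ⊢
  intro m hm
  have := h (Finsupp.single j N + m) (by simpa [hij.symm] using hm)
  rwa [X_pow_eq, coeff_add_monomial_mul, one_mul] at this

theorem X_pow_ne_zero' (i : Fin 2) (N : ℕ) : (X i ^ N : MvPowerSeries (Fin 2) k) ≠ 0 := by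
  apply pow_ne_zero
  intro h
  have := congrArg (coeff (Finsupp.single i 1)) h
  rw [coeff_index_single_self_X, map_zero] at this
  exact one_ne_zero this

theorem not_dvd_both {c : MvPowerSeries (Fin 2) k} (hc : constantCoeff c = 0) (N : ℕ)
    {i j : Fin 2} (hij : i ≠ j)
    (h0 : c ∣ X i ^ N) (h1 : c ∣ X j ^ N) : False := by
  obtain ⟨p, hp⟩ := h0
  obtain ⟨q, hq⟩ := h1
  have hd : (X i ^ N : MvPowerSeries (Fin 2) k) ∣ X j ^ N * p := ⟨q, by rw [hp, hq]; ring⟩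
  obtain ⟨p', rfl⟩ := X_pow_dvd_of hij N p hd
  have : c * p' = 1 := by
    apply mul_left_cancel₀ (X_pow_ne_zero' (k := k) i N)
    rw [mul_one]
    conv_rhs => rw [hp]
    ring
  have h2 := congrArg constantCoeff this
  rw [map_mul, hc, zero_mul, map_one] at h2
  exact zero_ne_one h2

theorem regular_pair {a b : MvPowerSeries (Fin 2) k} (N : ℕ)
    (hN : fil (Fin 2) k N ≤ Ideal.span {a, b}) (hb : b ≠ 0) {c d : MvPowerSeries (Fin 2) k}
    (h : c * a = d * b) : ∃ t, c = b * t ∧ d = a * t := by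
  obtain ⟨p, q, hpq⟩ := Ideal.mem_span_pair.mp (hN (X_pow_mem_fil 0 N))
  obtain ⟨p', q', hpq'⟩ := Ideal.mem_span_pair.mp (hN (X_pow_mem_fil 1 N))
  have e1 : X 0 ^ N * c = b * (p * d + q * c) := by
    rw [← hpq]; linear_combination p * h
  have e2 : X 1 ^ N * c = b * (p' * d + q' * c) := by
    rw [← hpq']; linear_combination p' * h
  have e3 : X 1 ^ N * (p * d + q * c) = X 0 ^ N * (p' * d + q' * c) := by
    apply mul_left_cancel₀ hb
    linear_combination X 0 ^ N * e2 - X 1 ^ N * e1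
  obtain ⟨t, ht⟩ := X_pow_dvd_of (zero_ne_one) N _ ⟨_, e3⟩
  have hc : c = b * t := by
    apply mul_left_cancel₀ (X_pow_ne_zero' (k := k) 0 N)
    rw [e1, ht]; ring
  refine ⟨t, hc, ?_⟩
  apply mul_left_cancel₀ hb
  rw [hc] at h
  linear_combination -h

variable [CharP k 2] (g : MvPowerSeries (Fin 2) k →ₐ[k] MvPowerSeries (Fin 2) k)

theorem two_zero {σ : Type*} : (2 : MvPowerSeries σ k) = 0 := by
  have : (2 : MvPowerSeries σ k) = C (2 : k) := (map_ofNat C 2).symm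
  rw [this, CharTwo.two_eq_zero, map_zero]

theorem g_fil (hg2 : ∀ s, g (g s) = s) (i : Fin 2) : g (X i) ∈ fil (Fin 2) k 1 := by
  rw [mem_fil_one]
  by_contra h
  have h1 : IsUnit (g (X i)) := isUnit_iff_constantCoeff.mpr (isUnit_iff_ne_zero.mpr h)
  have h2 := h1.map g
  rw [hg2, isUnit_iff_constantCoeff] at h2
  simp at h2

theorem D_mem {i j : Fin 2} (hij : i ≠ j) (hg1 : ∀ i, g (X i) ∈ fil (Fin 2) k 1) (N : ℕ)
    (hN : fil (Fin 2) k N ≤ Ideal.span {X i + g (X i), X j + g (X j)})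
    (s : MvPowerSeries (Fin 2) k) : s + g s ∈ Ideal.span {X i + g (X i), X j + g (X j)} := by
  have h2 := two_zero (k := k) (σ := Fin 2)
  have key : ∀ n, ∀ s, s + g s ∈ Ideal.span {X i + g (X i), X j + g (X j)} ⊔ fil (Fin 2) k n := by
    intro n
    induction n with
    | zero => intro s; exact Ideal.mem_sup_right (mem_fil_zero _)
    | succ n ih =>
      intro s
      obtain ⟨t, ht⟩ := decomp s
      have e : s + g s = ∑ l, ((t l + g (t l)) * g (X l) + t l * (X l + g (X l))) := by
        conv_lhs => rw [ht]
        rw [map_add, algHom_C, map_sum]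
        have : ∀ c A B : MvPowerSeries (Fin 2) k, c + A + (c + B) = A + B := fun c A B => by
          linear_combination c * h2
        rw [this, ← Finset.sum_add_distrib]
        refine Finset.sum_congr rfl fun l _ => ?_
        rw [map_mul]
        linear_combination (-(t l * g (X l))) * h2
      rw [e]
      refine Ideal.sum_mem _ fun l _ => Ideal.add_mem _ ?_ ?_
      · obtain ⟨p, hp, q, hq, hpq⟩ := Submodule.mem_sup.mp (ih (t l))
        rw [← hpq, add_mul]
        refine Ideal.add_mem _ (Ideal.mem_sup_left (Ideal.mul_mem_right _ _ hp))
          (Ideal.mem_sup_right (fil_mul hq (hg1 l)))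
      · refine Ideal.mem_sup_left (Ideal.mul_mem_left _ _ (Ideal.subset_span ?_))
        have : l = i ∨ l = j := by omega
        rcases this with rfl | rfl <;> simp
  have := key N s
  rwa [sup_eq_left.mpr hN] at this

theorem no_offdiag (hg2 : ∀ s, g (g s) = s) {i j : Fin 2} (hij : i ≠ j) (N : ℕ)
    (hN : fil (Fin 2) k N ≤ Ideal.span {X i + g (X i), X j + g (X j)}) :
    coeff (Finsupp.single j 1) (X i + g (X i)) = 0 := by
  classical
  by_contra hne
  have h2 := two_zero (k := k) (σ := Fin 2)
  have hg1 := g_fil g hg2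
  set a := X i + g (X i) with ha
  have hafil : a ∈ fil (Fin 2) k (0 + 1) := Ideal.add_mem _ (X_mem_fil i) (hg1 i)
  obtain ⟨t, -, ht⟩ := fil_decomp hafil
  have hsum : ∑ l, X l * t l = X i * t i + X j * t j := by
    rw [Fin.sum_univ_two]
    have : (i = 0 ∧ j = 1) ∨ (i = 1 ∧ j = 0) := by omega
    rcases this with ⟨rfl, rfl⟩ | ⟨rfl, rfl⟩
    · rfl
    · rw [add_comm]
  rw [hsum] at ht
  have hc : constantCoeff (t j) ≠ 0 := by
    intro h
    apply hne
    rw [ht, map_add, X_def, X_def, coeff_monomial_mul, coeff_monomial_mul, if_neg, if_pos le_rfl,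
      tsub_self, coeff_zero_eq_constantCoeff_apply, h]
    · simp
    · intro hle
      have := hle i
      simp [hij] at this
  obtain ⟨w, hw⟩ := (isUnit_iff_constantCoeff.mpr (isUnit_iff_ne_zero.mpr hc)).exists_right_inv
  have hga : g a = a := by rw [ha, map_add, hg2, add_comm]
  have hXj : X j = w * a - w * t i * X i := by
    rw [ht]; linear_combination (- X j) * hw
  have hDw := D_mem g hij hg1 N hN (w * t i)
  rw [← ha] at hDw
  obtain ⟨α, β, hαβ⟩ := Ideal.mem_span_pair.mp hDw
  set b := X j + g (X j) with hb
  have hbe : b * (1 - β * g (X i)) = a * ((w + g w) + w * t i + α * g (X i)) := by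
    have e : b = (w + g w) * a + (w * t i + g (w * t i)) * g (X i) + w * t i * a := by
      rw [hb, hXj, map_sub, map_mul, hga, map_mul g (w * t i)]
      have : g (X i) = a - X i := by rw [ha]; ring
      rw [this]
      linear_combination (- (g (w * t i) * (a - X i))
        - w * t i * a) * h2
    rw [← hαβ] at e
    linear_combination e
  have hu : IsUnit (1 - β * g (X i)) := by
    rw [isUnit_iff_constantCoeff, map_sub, map_mul, mem_fil_one.mp (hg1 i)]
    simp
  have hdvd : a ∣ b := by
    rw [← hu.dvd_mul_right]; exact ⟨_, hbe⟩
  have hall : ∀ s ∈ fil (Fin 2) k N, a ∣ s := by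
    intro s hs
    obtain ⟨p, q, rfl⟩ := Ideal.mem_span_pair.mp (hN hs)
    exact dvd_add (dvd_mul_left _ _) (hdvd.mul_left _)
  exact not_dvd_both (mem_fil_one.mp hafil) N hij (hall _ (X_pow_mem_fil i N))
    (hall _ (X_pow_mem_fil j N))

theorem mem_fil_two {i j : Fin 2} (hij : i ≠ j) {s : MvPowerSeries (Fin 2) k}
    (h0 : constantCoeff s = 0) (hi : coeff (Finsupp.single i 1) s = 0)
    (hj : coeff (Finsupp.single j 1) s = 0) : s ∈ fil (Fin 2) k 2 := by
  intro d hd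
  by_cases hd1 : d.degree < 1
  · exact mem_fil_one.mpr h0 d hd1
  · have hd' : d = ee (d 0) (d 1) := by
      ext l
      fin_cases l
      · exact (ee_zero _ _).symm
      · exact (ee_one _ _).symm
    have hdeg : d.degree = d 0 + d 1 := by rw [hd', ee_degree, ee_zero, ee_one]
    have : (d 0 = 1 ∧ d 1 = 0) ∨ (d 0 = 0 ∧ d 1 = 1) := by omega
    have hd2 : d = Finsupp.single 0 1 ∨ d = Finsupp.single 1 1 := by
      rcases this with ⟨p, q⟩ | ⟨p, q⟩
      · left; rw [hd', p, q, ee]; simp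
      · right; rw [hd', p, q, ee]; simp
    have : (i = 0 ∧ j = 1) ∨ (i = 1 ∧ j = 0) := by omega
    rcases this with ⟨rfl, rfl⟩ | ⟨rfl, rfl⟩ <;> rcases hd2 with h | h <;> rw [h] <;> assumption

theorem a_fil_two (hg2 : ∀ s, g (g s) = s) {i j : Fin 2} (hij : i ≠ j) (N : ℕ)
    (hN : fil (Fin 2) k N ≤ Ideal.span {X i + g (X i), X j + g (X j)}) :
    X i + g (X i) ∈ fil (Fin 2) k 2 := by
  classical
  have h2 := two_zero (k := k) (σ := Fin 2)
  have hoff := no_offdiag g hg2 hij N hN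
  have hg1 := g_fil g hg2
  set a := X i + g (X i) with ha
  have hafil : a ∈ fil (Fin 2) k 1 := Ideal.add_mem _ (X_mem_fil i) (hg1 i)
  have hga : g a = a := by rw [ha, map_add, hg2, add_comm]
  set l := coeff (Finsupp.single i 1) a with hl
  have hs : Finsupp.single i 1 ≠ (Finsupp.single j 1 : Fin 2 →₀ ℕ) := by
    intro h
    have := Finsupp.single_left_injective one_ne_zero h
    exact hij this
  have hh : a - C l * X i ∈ fil (Fin 2) k 2 := by
    apply mem_fil_two hij
    · rw [map_sub, mem_fil_one.mp hafil]; simp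
    · rw [map_sub, coeff_C_mul, coeff_index_single_self_X, ← hl]; ring
    · rw [map_sub, coeff_C_mul, hoff, coeff_X, if_neg hs.symm]; simp
  have hgh : g (a - C l * X i) ∈ fil (Fin 2) k 2 := by
    have := algHom_fil g 1 hg1 2 _ hh
    rwa [one_mul] at this
  have hla : C l * a ∈ fil (Fin 2) k 2 := by
    have e : C l * a = -((a - C l * X i) + g (a - C l * X i)) := by
      rw [map_sub, map_mul, algHom_C, hga, ha]
      linear_combination (X i + g (X i)) * h2
    rw [e]
    exact neg_mem (Ideal.add_mem _ hh hgh)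
  have hl0 : l * l = 0 := by
    have := hla (Finsupp.single i 1) (by rw [Finsupp.degree_single]; omega)
    rwa [coeff_C_mul] at this
  rw [mul_self_eq_zero] at hl0
  exact mem_fil_two hij (mem_fil_one.mp hafil) hl0 hoff

end Free

end

/-- Let `k` be a field of characteristic 2 and `S = k[[u,v]]` with an action
of `Z/2Z = {1, g}` (an algebra involution `g`), free outside the closed point (the ideal
`(u + g u, v + g v)` contains a power of the maximal ideal `(u, v)`).  With
`x = u·g(u)`, `y = v·g(v)`, `z = u·g(v) + g(u)·v`, `a = u + g(u)`, `b = v + g(v)`,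
the invariant ring `S^G` equals `k[[x,y,z]]/(z² + abz + a²y + b²x)`, where `a, b` are
expressed as power series `A, B` in `x, y, z`: there is a `k`-algebra isomorphism from
the quotient of `k[[X,Y,Z]]` by `(Z² + ABZ + A²Y + B²X)` onto the fixed subalgebra,
sending `X, Y, Z, A, B` to `x, y, z, a, b` respectively. -/
theorem stmt12 (k : Type*) [Field k] [CharP k 2]
    (g : MvPowerSeries (Fin 2) k →ₐ[k] MvPowerSeries (Fin 2) k)
    (hg2 : ∀ s, g (g s) = s) (hg_ne : g ≠ AlgHom.id k (MvPowerSeries (Fin 2) k))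
    (u v : MvPowerSeries (Fin 2) k) (hu : u = X 0) (hv : v = X 1)
    (hfree : ∃ n : ℕ,
      (Ideal.span {(X 0 : MvPowerSeries (Fin 2) k), X 1}) ^ n ≤ Ideal.span {u + g u, v + g v})
    (x y z a b : MvPowerSeries (Fin 2) k)
    (hx : x = u * g u) (hy : y = v * g v) (hz : z = u * g v + g u * v)
    (ha : a = u + g u) (hb : b = v + g v) :
    ∃ (A B : MvPowerSeries (Fin 3) k)
      (φ : (MvPowerSeries (Fin 3) k ⧸
        Ideal.span {(X 2 : MvPowerSeries (Fin 3) k) ^ 2 + A * B * X 2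
          + A ^ 2 * X 1 + B ^ 2 * X 0}) ≃ₐ[k] fixedSubalgebra g),
      ((φ (Ideal.Quotient.mk _ (X 0)) : MvPowerSeries (Fin 2) k) = x) ∧
      ((φ (Ideal.Quotient.mk _ (X 1)) : MvPowerSeries (Fin 2) k) = y) ∧
      ((φ (Ideal.Quotient.mk _ (X 2)) : MvPowerSeries (Fin 2) k) = z) ∧
      ((φ (Ideal.Quotient.mk _ A) : MvPowerSeries (Fin 2) k) = a) ∧
      ((φ (Ideal.Quotient.mk _ B) : MvPowerSeries (Fin 2) k) = b) := by
  subst hu hv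
  have h2 := two_zero (k := k) (σ := Fin 2)
  obtain ⟨N, hN'⟩ := hfree
  have hN : fil (Fin 2) k N ≤ Ideal.span {X 0 + g (X 0), X 1 + g (X 1)} :=
    (fil_le_span_pow N).trans hN'
  have hNs : fil (Fin 2) k N ≤ Ideal.span {X 1 + g (X 1), X 0 + g (X 0)} := by
    rwa [Set.pair_comm]
  have ha2 : a ∈ fil (Fin 2) k 2 := ha ▸ a_fil_two g hg2 zero_ne_one N hN
  have hb2 : b ∈ fil (Fin 2) k 2 := hb ▸ a_fil_two g hg2 one_ne_zero N hNs
  rw [← ha, ← hb] at hN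
  have hg1 := g_fil g hg2
  have hgu : g (X 0) = a - X 0 := by rw [ha]; ring
  have hgv : g (X 1) = b - X 1 := by rw [hb]; ring
  have hga : g a = a := by rw [ha, map_add, hg2, add_comm]
  have hgb : g b = b := by rw [hb, map_add, hg2, add_comm]
  have hgx : g x = x := by rw [hx, map_mul, hg2, mul_comm]
  have hgy : g y = y := by rw [hy, map_mul, hg2, mul_comm]
  have hgz : g z = z := by rw [hz, map_add, map_mul, map_mul, hg2, hg2]; ring
  have hb0 : b ≠ 0 := by
    intro h0
    rw [h0] at hN
    have hall : ∀ s ∈ fil (Fin 2) k N, a ∣ s := by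
      intro s hs
      obtain ⟨p, q, rfl⟩ := Ideal.mem_span_pair.mp (hN hs)
      rw [mul_zero, add_zero]
      exact dvd_mul_left _ _
    exact not_dvd_both (mem_fil_one.mp (fil_le (by omega) ha2)) N zero_ne_one
      (hall _ (X_pow_mem_fil 0 N)) (hall _ (X_pow_mem_fil 1 N))
  have hx1 : x ∈ fil (Fin 2) k 1 := hx ▸ Ideal.mul_mem_right _ _ (X_mem_fil 0)
  have hy1 : y ∈ fil (Fin 2) k 1 := hy ▸ Ideal.mul_mem_right _ _ (X_mem_fil 1)
  have hz1 : z ∈ fil (Fin 2) k 1 := hz ▸ Ideal.add_mem _ (Ideal.mul_mem_right _ _ (X_mem_fil 0))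
    (Ideal.mul_mem_left _ _ (X_mem_fil 1))
  -- the substitution maps
  have hsρ : HasSubst (![x, y] : Fin 2 → MvPowerSeries (Fin 2) k) := by
    apply hasSubst_of_constantCoeff_zero
    intro i
    fin_cases i
    · exact mem_fil_one.mp hx1
    · exact mem_fil_one.mp hy1
  have hsθ : HasSubst (![x, y, z] : Fin 3 → MvPowerSeries (Fin 2) k) := by
    apply hasSubst_of_constantCoeff_zero
    intro i
    fin_cases i
    · exact mem_fil_one.mp hx1
    · exact mem_fil_one.mp hy1
    · exact mem_fil_one.mp hz1
  obtain ⟨ρ, hρ⟩ : ∃ ρ : MvPowerSeries (Fin 2) k →ₐ[k] MvPowerSeries (Fin 2) k,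
      ∀ i, ρ (X i) = ![x, y] i := ⟨substAlgHom hsρ, fun i => substAlgHom_X hsρ i⟩
  obtain ⟨θ, hθ⟩ : ∃ θ : MvPowerSeries (Fin 3) k →ₐ[k] MvPowerSeries (Fin 2) k,
      ∀ i, θ (X i) = ![x, y, z] i := ⟨substAlgHom hsθ, fun i => substAlgHom_X hsθ i⟩
  have hρ0 : ρ (X 0) = x := hρ 0
  have hρ1 : ρ (X 1) = y := hρ 1
  have hθ0 : θ (X 0) = x := hθ 0
  have hθ1 : θ (X 1) = y := hθ 1
  have hθ2 : θ (X 2) = z := hθ 2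
  have hρfil : ∀ i, ρ (X i) ∈ fil (Fin 2) k 1 := by
    intro i
    fin_cases i
    · exact hρ0 ▸ hx1
    · exact hρ1 ▸ hy1
  have hθfil : ∀ i, θ (X i) ∈ fil (Fin 2) k 1 := by
    intro i
    fin_cases i
    · exact hθ0 ▸ hx1
    · exact hθ1 ▸ hy1
    · exact hθ2 ▸ hz1
  have hgρ : ∀ P, g (ρ P) = ρ P := by
    have : ρ = g.comp ρ := by
      apply algHom_ext_fil _ _ hρfil
      intro i
      fin_cases i
      · change ρ (X 0) = g (ρ (X 0)); rw [hρ0, hgx]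
      · change ρ (X 1) = g (ρ (X 1)); rw [hρ1, hgy]
    intro P
    exact (DFunLike.congr_fun this P).symm
  have hgθ : ∀ P, g (θ P) = θ P := by
    have : θ = g.comp θ := by
      apply algHom_ext_fil _ _ hθfil
      intro i
      fin_cases i
      · change θ (X 0) = g (θ (X 0)); rw [hθ0, hgx]
      · change θ (X 1) = g (θ (X 1)); rw [hθ1, hgy]
      · change θ (X 2) = g (θ (X 2)); rw [hθ2, hgz]
    intro P
    exact (DFunLike.congr_fun this P).symm
  have hθι : ∀ P, θ (iot P) = ρ P := by
    have : ρ = θ.comp iot := by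
      apply algHom_ext_fil _ _ hρfil
      intro i
      change ρ (X i) = θ (iot (X i))
      rw [iot, rename_X]
      fin_cases i
      · exact hρ0.trans hθ0.symm
      · exact hρ1.trans hθ1.symm
    intro P
    exact (DFunLike.congr_fun this P).symm
  have hρ3 : ∀ i, ρ (X i) - X i ^ 2 ∈ fil (Fin 2) k 3 := by
    intro i
    fin_cases i
    · change ρ (X 0) - X 0 ^ 2 ∈ _
      have e : ρ (X 0) - X 0 ^ 2 = X 0 * a := by
        rw [hρ0, hx, hgu]; linear_combination (- X 0 ^ 2) * h2
      rw [e]; exact fil_mul (X_mem_fil 0) ha2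
    · change ρ (X 1) - X 1 ^ 2 ∈ _
      have e : ρ (X 1) - X 1 ^ 2 = X 1 * b := by
        rw [hρ1, hy, hgv]; linear_combination (- X 1 ^ 2) * h2
      rw [e]; exact fil_mul (X_mem_fil 1) hb2
  have he : X 0 * g (X 1) - X 0 * X 1 ∈ fil (Fin 2) k 3 := by
    have e : X 0 * g (X 1) - X 0 * X 1 = X 0 * b := by
      rw [hgv]; linear_combination (- X 0 * X 1) * h2
    rw [e]; exact fil_mul (X_mem_fil 0) hb2
  have hspan := cmpr_span ρ (X 0 * g (X 1)) hρ3 he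
  have hind := cmpr_indep ρ hρ3
  -- every invariant is a power series in `x, y, z`
  have hsurj : ∀ s ∈ {s | g s = s}, ∃ F, θ F = s := by
    apply surj_of_decomp θ hθfil
    intro s hs
    replace hs : g s = s := hs
    obtain ⟨P, Q, R, T, hsP⟩ := hspan s
    have hgs : g s = ρ P + ρ Q * g (X 0) + ρ R * g (X 1) + ρ T * (g (X 0) * X 1) := by
      rw [hsP]; simp only [map_add, map_mul, hgρ, hg2]
    have hrel : (ρ Q + ρ T * X 1) * a = (ρ R + ρ T * X 0) * b := by
      rw [hs, hgu, hgv] at hgs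
      rw [hgv] at hsP
      linear_combination hsP - hgs + (- ρ R * b + ρ Q * X 0 + ρ R * X 1) * h2
    obtain ⟨t, ht1, ht2⟩ := regular_pair N hN hb0 hrel
    have htT : ρ T = t + g t := by
      apply mul_left_cancel₀ hb0
      have := congrArg g ht1
      rw [map_add, map_mul, map_mul, hgρ, hgρ, hgb, hgv] at this
      linear_combination ht1 - this + (- ρ T * X 1 + ρ T * b - b * g t) * h2
    obtain ⟨t0, t1, t2, t3, ht⟩ := hspan t
    have hgt : g t = ρ t0 + ρ t1 * g (X 0) + ρ t2 * g (X 1) + ρ t3 * (g (X 0) * X 1) := by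
      rw [ht]; simp only [map_add, map_mul, hgρ, hg2]
    obtain ⟨p, hp⟩ := decomp P
    have hρP : ρ P = C (constantCoeff P) + x * ρ (p 0) + y * ρ (p 1) := by
      conv_lhs => rw [hp]
      rw [map_add, algHom_C, Fin.sum_univ_two, map_add, map_mul, map_mul, hρ0, hρ1]; ring
    have hfin : s = C (constantCoeff P) + (x * (ρ (p 0) + ρ t1 * b) + y * (ρ (p 1) + ρ t2 * a)
        + z * (ρ t0 + ρ t2 * b)) := by
      have hs1 : s = ρ P + t * (g (X 0) * X 1) + g t * (X 0 * g (X 1)) := by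
        rw [hgv] at hsP
        rw [hgu, hgv]
        linear_combination hsP + X 0 * ht1 + X 1 * ht2 + (X 0 * (b - X 1)) * htT
          + (t * b * X 0 - ρ T * X 0 * X 1) * h2
      have hs2 : s = ρ P + (ρ t0 + ρ t1 * X 0 + ρ t2 * X 1 + ρ t3 * (X 0 * g (X 1)))
          * (g (X 0) * X 1) + (ρ t0 + ρ t1 * g (X 0) + ρ t2 * g (X 1)
          + ρ t3 * (g (X 0) * X 1)) * (X 0 * g (X 1)) := by
        rw [← hgt, ← ht]; exact hs1
      rw [hs2, hρP]
      generalize ρ (p 0) = q0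
      generalize ρ (p 1) = q1
      rw [hx, hy, hz, ha, hb]
      linear_combination (ρ t3 * X 0 * g (X 0) * X 1 * g (X 1)
        - ρ t2 * X 1 * g (X 1) * (X 0 + g (X 0))) * h2
    refine ⟨constantCoeff P, ![ρ (p 0) + ρ t1 * b, ρ (p 1) + ρ t2 * a, ρ t0 + ρ t2 * b], ?_, ?_⟩
    · intro i
      fin_cases i <;> simp [hgρ, hga, hgb]
    · rw [Fin.sum_univ_three, hθ0, hθ1, hθ2]
      exact hfin
  obtain ⟨A, hA⟩ := hsurj a hga
  obtain ⟨B, hB⟩ := hsurj b hgb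
  have hfil1 : ∀ F, θ F ∈ fil (Fin 2) k 1 → F ∈ fil (Fin 3) k 1 := by
    intro F hF
    have h1 : F - C (constantCoeff F) ∈ fil (Fin 3) k 1 := by rw [mem_fil_one]; simp
    have h3 := algHom_fil θ 1 hθfil 1 _ h1
    rw [map_sub, algHom_C] at h3
    have h4 := Ideal.sub_mem _ hF h3
    rw [sub_sub_cancel, mem_fil_one, constantCoeff_C] at h4
    exact mem_fil_one.mpr h4
  have hA1 : A ∈ fil (Fin 3) k 1 := hfil1 A (hA ▸ fil_le (by omega) ha2)
  have hB1 : B ∈ fil (Fin 3) k 1 := hfil1 B (hB ▸ fil_le (by omega) hb2)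
  set f : MvPowerSeries (Fin 3) k := X 2 ^ 2 + A * B * X 2 + A ^ 2 * X 1 + B ^ 2 * X 0 with hf
  have hffil : f - X 2 ^ 2 ∈ fil (Fin 3) k 3 := by
    have e : f - X 2 ^ 2 = A * B * X 2 + A * A * X 1 + B * B * X 0 := by rw [hf]; ring
    rw [e]
    exact Ideal.add_mem _ (Ideal.add_mem _ (fil_mul (fil_mul hA1 hB1) (X_mem_fil 2))
      (fil_mul (fil_mul hA1 hA1) (X_mem_fil 1))) (fil_mul (fil_mul hB1 hB1) (X_mem_fil 0))
  have hzz : z = X 0 * b + X 1 * a := by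
    rw [hz, hgu, hgv]; linear_combination (- X 0 * X 1) * h2
  have hθf : θ f = 0 := by
    rw [hf]
    simp only [map_add, map_mul, map_pow]
    rw [hA, hB, hθ0, hθ1, hθ2, hx, hy, hzz, hgu, hgv]
    linear_combination (X 0 * X 1 * a * b + a ^ 2 * b * X 1 + a * b ^ 2 * X 0) * h2
  have hform : ∀ F, ∃ P Q : MvPowerSeries (Fin 2) k, ∃ q, F = iot P + iot Q * X 2 + q * f ∧
      θ F = ρ P + ρ Q * z := by
    intro F
    obtain ⟨P, Q, q, e⟩ := weier f hffil F
    refine ⟨P, Q, q, e, ?_⟩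
    rw [e, map_add, map_add, map_mul, map_mul, hθι, hθι, hθ2, hθf, mul_zero, add_zero]
  have hker : ∀ F, θ F = 0 → F ∈ Ideal.span {f} := by
    intro F hF
    obtain ⟨P, Q, q, e, e'⟩ := hform F
    obtain ⟨a0, a1, _, _, ea⟩ := hform A
    obtain ⟨b0, b1, _, _, eb⟩ := hform B
    rw [hF] at e'
    rw [hA] at ea
    rw [hB] at eb
    have hQa : ρ (Q * a0 - a1 * P) = ρ Q * a := by
      rw [map_sub, map_mul, map_mul, ea]; linear_combination (ρ a1) * e'
    have hQb : ρ (Q * b0 - b1 * P) = ρ Q * b := by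
      rw [map_sub, map_mul, map_mul, eb]; linear_combination (ρ b1) * e'
    have h0 := hind P (Q * b0 - b1 * P) (Q * a0 - a1 * P) (by
      rw [hQa, hQb]; rw [hzz] at e'; linear_combination -e')
    have hρQ : ρ Q = 0 := by
      have : ρ Q * b = 0 := by rw [← hQb, h0.2.1, map_zero]
      exact (mul_eq_zero.mp this).resolve_right hb0
    have hQ : Q = 0 := (hind Q 0 0 (by simp [hρQ])).1
    rw [e, h0.1, hQ, Ideal.mem_span_singleton]
    simp
  -- the isomorphism
  let θ' : MvPowerSeries (Fin 3) k →ₐ[k] fixedSubalgebra g := θ.codRestrict _ hgθ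
  have hθ' : ∀ F, ((θ' F : fixedSubalgebra g) : MvPowerSeries (Fin 2) k) = θ F := fun F => rfl
  have hlift : ∀ F ∈ Ideal.span {f}, θ' F = 0 := by
    intro F hF
    apply Subtype.ext
    rw [hθ']
    obtain ⟨q, rfl⟩ := Ideal.mem_span_singleton.mp hF
    rw [map_mul, hθf, zero_mul]; rfl
  let ψ := Ideal.Quotient.liftₐ (Ideal.span {f}) θ' hlift
  have hψ : ∀ F, ((ψ (Ideal.Quotient.mk _ F) : fixedSubalgebra g) : MvPowerSeries (Fin 2) k)
      = θ F := fun F => rfl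
  have hbij : Function.Bijective ψ := by
    constructor
    · rw [injective_iff_map_eq_zero]
      intro q hq
      obtain ⟨F, rfl⟩ := Ideal.Quotient.mk_surjective q
      rw [Ideal.Quotient.eq_zero_iff_mem]
      apply hker
      rw [← hψ, hq]; rfl
    · rintro ⟨s, hs⟩
      obtain ⟨F, hF⟩ := hsurj s hs
      exact ⟨Ideal.Quotient.mk _ F, Subtype.ext (by rw [hψ, hF])⟩
  refine ⟨A, B, AlgEquiv.ofBijective ψ hbij, ?_, ?_, ?_, ?_, ?_⟩
  · exact (hψ _).trans hθ0
  · exact (hψ _).trans hθ1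
  · exact (hψ _).trans hθ2
  · exact (hψ _).trans hA
  · exact (hψ _).trans hB
end
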